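/- arXiv:1404.6939 — 2 statements merged into one kernel-verified Lean document; each statement's English description precedes it below -/
import Mathlib

section
/- Let (V,π) be a complete discrete valuation ring of characteristic zero whose residue field k = V/(π) is algebraically closed of characteristic p > 0, and let G ⊆ GL₂(V) be a finite subgroup with p ∤ |G| having no pseudo-reflections except the identity, acting linearly on S = V[[x₁,x₂]]. Let θ = π − g where g ∈ (x₁,x₂)² ∩ S^G (g = 0 allowed). Then for all L₁, L₂ ∈ add_{S^G}(S), the element θ is a non-zerodivisor on Ext¹_{S^G}(L₁, L₂). -/
/-- The subring of invariants `R^G` of a ring `R` under an action of a group `G`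
by ring automorphisms. -/
def fixedSubring (G R : Type*) [Group G] [CommRing R] [MulSemiringAction G R] :
    Subring R where
  carrier := {x | ∀ σ : G, σ • x = x}
  mul_mem' := by intro a b ha hb σ; rw [smul_mul', ha σ, hb σ]
  one_mem' := by intro σ; exact smul_one σ
  add_mem' := by intro a b ha hb σ; rw [smul_add, ha σ, hb σ]
  zero_mem' := by intro σ; exact smul_zero σ
  neg_mem' := by intro a ha σ; rw [smul_neg, ha σ]


/-- `M ∈ add_A(S)`: `M` is (isomorphic to) a direct summand of a finite direct sum of
copies of `S`, as an `A`-module. -/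
def MemAdd (A : Type*) [CommRing A] (S : Type*) [AddCommGroup S] [Module A S]
    (M : Type*) [AddCommGroup M] [Module A M] : Prop :=
  ∃ (n : ℕ) (N N' : Submodule A (Fin n → S)), IsCompl N N' ∧ Nonempty (M ≃ₗ[A] N)

open MvPowerSeries IsLocalRing CategoryTheory

/-
Write `S` for the power series ring. If `σ ≠ 1`, then `σ - 1` is invertible on the span of the
variables, so every variable lies in the ideal generated by all `s - σ • s`. Multiplying over
`σ ≠ 1`, for a power `f` of any variable the function `G → S` equal to `f` at `1` and to `0`
elsewhere has the form `τ ↦ ∑ a * τ • b`. Hence for every `S^G`-linear `φ : S → S/θS`, the map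
`s ↦ φ (f * s)` is an `S/θS`-combination of elements of `G`. As `θ, X i, X j` is a regular
sequence, comparing these combinations for powers of two distinct variables shows that `φ` itself
is such a combination, so it lifts to `S → S`. Passing to direct summands,
`Hom(L₁, L₂) → Hom(L₁, L₂/θL₂)` is surjective, and the long exact sequence of
`0 → L₂ → L₂ → L₂/θL₂ → 0` shows that `θ` is regular on `Ext¹(L₁, L₂)`.
-/

universe v u w

section Ext

open scoped Pointwise

variable {R : Type w} [CommRing R]

theorem isSMulRegular_homology (K : ShortComplex (ModuleCat.{v} R)) (r : R)
    (h : ∀ f u, K.f u = r • f → ∃ v, K.f v = f) : IsSMulRegular K.homology r := by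
  suffices IsSMulRegular K.moduleCatLeftHomologyData.H r from
    (K.moduleCatHomologyIso.toLinearEquiv.isSMulRegular_congr r).2 this
  refine (isSMulRegular_quotient_iff_mem_of_smul_mem _ r).2 ?_
  rintro z ⟨u, hu⟩
  obtain ⟨v, hv⟩ := h z.1 u (congrArg Subtype.val hu)
  exact ⟨v, Subtype.ext hv⟩

variable {C : Type u} [Category.{v} C] [Abelian C] [Linear R C]

theorem exists_comp_eq_of_comp_eq_smul {r : R} {X Y Z : C} {q : Y ⟶ Z} [Mono (r • 𝟙 Y)]
    (w : (r • 𝟙 Y) ≫ q = 0) (hq : (ShortComplex.mk _ _ w).Exact)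
    (hlift : Function.Surjective fun ψ : X ⟶ Y => ψ ≫ q) {P₀ P₁ : C} {d : P₁ ⟶ P₀} {ε : P₀ ⟶ X}
    (hdε : d ≫ ε = 0) (hε : Limits.IsColimit (Limits.CokernelCofork.ofπ ε hdε))
    {f : P₁ ⟶ Y} {u : P₀ ⟶ Y} (hu : d ≫ u = r • f) : ∃ v : P₀ ⟶ Y, d ≫ v = f := by
  obtain ⟨φ, hφ⟩ : ∃ φ : X ⟶ Z, ε ≫ φ = u ≫ q :=
    Limits.CokernelCofork.IsColimit.desc' hε (u ≫ q) (by
      rw [← Category.assoc, hu]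
      simpa using f ≫= w) |>.exists_of_subtype
  obtain ⟨ψ, hψ : ψ ≫ q = φ⟩ := hlift φ
  have hker : (u - ε ≫ ψ) ≫ q = 0 := by
    rw [Preadditive.sub_comp, Category.assoc, hψ, hφ, sub_self]
  have hv : hq.lift _ hker ≫ (r • 𝟙 Y) = u - ε ≫ ψ := hq.lift_f _ hker
  refine ⟨hq.lift _ hker, ?_⟩
  rw [← cancel_mono (r • 𝟙 Y), Category.assoc, hv, Preadditive.comp_sub, hu, ← Category.assoc,
    hdε, Limits.zero_comp, sub_zero, Linear.comp_smul, Category.comp_id]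

variable [EnoughProjectives C]

theorem isSMulRegular_ext_one_of_surjective_comp {r : R} {X Y Z : C} {q : Y ⟶ Z} [Mono (r • 𝟙 Y)]
    (w : (r • 𝟙 Y) ≫ q = 0) (hq : (ShortComplex.mk _ _ w).Exact)
    (hlift : Function.Surjective fun ψ : X ⟶ Y => ψ ≫ q) :
    IsSMulRegular (((Ext R C 1).obj (Opposite.op X)).obj Y) r := by
  let P := projectiveResolution X
  let K := P.complex.linearYonedaObj R Y
  let e := P.isoExt (R := R) 1 Y ≪≫ K.homologyIsoSc' 0 1 2 (by simp) (by simp)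
  refine (e.toLinearEquiv.isSMulRegular_congr r).2 (isSMulRegular_homology _ r ?_)
  exact fun _ _ =>
    exists_comp_eq_of_comp_eq_smul w hq hlift P.complex_d_comp_π_f_zero P.isColimitCokernelCofork

variable {L₁ L₂ : Type v} [AddCommGroup L₁] [Module R L₁] [AddCommGroup L₂] [Module R L₂]
  [Small.{v} R]

theorem isSMulRegular_ext_one_moduleCat {r : R} (hr : IsSMulRegular L₂ r)
    (hlift : ∀ φ : L₁ →ₗ[R] QuotSMulTop r L₂,
      ∃ ψ : L₁ →ₗ[R] L₂, (r • ⊤ : Submodule R L₂).mkQ ∘ₗ ψ = φ) :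
    IsSMulRegular (((Ext R (ModuleCat.{v} R) 1).obj (Opposite.op (ModuleCat.of R L₁))).obj
      (ModuleCat.of R L₂)) r := by
  have : Mono (r • 𝟙 (ModuleCat.of R L₂)) := (ModuleCat.mono_iff_injective _).2 hr
  have w : (r • 𝟙 (ModuleCat.of R L₂)) ≫ ModuleCat.ofHom (r • ⊤ : Submodule R L₂).mkQ = 0 := by
    ext y
    exact (Submodule.Quotient.mk_eq_zero _).2 (Submodule.smul_mem_pointwise_smul y r ⊤ trivial)
  refine isSMulRegular_ext_one_of_surjective_comp w ?_ fun φ => ?_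
  · rw [ShortComplex.moduleCat_exact_iff]
    intro y hy
    obtain ⟨z, -, hz⟩ := (Submodule.Quotient.mk_eq_zero _).1 hy
    exact ⟨z, hz⟩
  · obtain ⟨ψ, hψ⟩ := hlift φ.hom
    exact ⟨ModuleCat.ofHom ψ, ModuleCat.hom_ext hψ⟩

end Ext

section Lifting

open scoped Pointwise

variable {A : Type*} [CommRing A] {M M' N N' : Type*} [AddCommGroup M] [Module A M]
  [AddCommGroup M'] [Module A M'] [AddCommGroup N] [Module A N] [AddCommGroup N'] [Module A N']

/-- `LiftsModulo r M N`: every linear map `M → N/rN` lifts to a linear map `M → N`, that is,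
`Hom(M, N) → Hom(M, N/rN)` is surjective. -/
def LiftsModulo (r : A) (M N : Type*) [AddCommGroup M] [Module A M] [AddCommGroup N]
    [Module A N] : Prop :=
  ∀ φ : M →ₗ[A] QuotSMulTop r N, ∃ ψ : M →ₗ[A] N, (r • ⊤ : Submodule A N).mkQ ∘ₗ ψ = φ

theorem quotSMulTop_mk_eq_mk_iff {r : A} {x y : N} :
    (Submodule.Quotient.mk x : QuotSMulTop r N) = Submodule.Quotient.mk y ↔
      ∃ z, r • z = x - y := by
  simp only [Submodule.Quotient.eq, Submodule.mem_smul_pointwise_iff_exists, Submodule.mem_top,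
    true_and]

theorem LiftsModulo.pi_left {r : A} (h : LiftsModulo r M N) (ι : Type*) [Finite ι] :
    LiftsModulo r (ι → M) N := by
  classical
  have := Fintype.ofFinite ι
  intro φ
  choose ψ hψ using fun i => h (φ ∘ₗ LinearMap.single A (fun _ => M) i)
  refine ⟨LinearMap.lsum A (fun _ => M) A ψ, LinearMap.pi_ext' fun i => ?_⟩
  rw [← hψ, LinearMap.comp_assoc]
  congr 1
  exact LinearMap.ext fun x => LinearMap.lsum_piSingle A _ A ψ i x

theorem LiftsModulo.pi_right {r : A} (h : LiftsModulo r M N) (ι : Type*) :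
    LiftsModulo r M (ι → N) := by
  intro φ
  choose ψ hψ using fun i => h (QuotSMulTop.map r (LinearMap.proj i) ∘ₗ φ)
  refine ⟨LinearMap.pi ψ, LinearMap.ext fun x => ?_⟩
  obtain ⟨y, hy⟩ := Submodule.Quotient.mk_surjective _ (φ x)
  have hcoord (i : ι) : ∃ z, r • z = ψ i x - y i := by
    rw [← quotSMulTop_mk_eq_mk_iff]
    simpa [← hy] using LinearMap.congr_fun (hψ i) x
  choose z hz using hcoord
  exact (quotSMulTop_mk_eq_mk_iff.2 ⟨z, funext hz⟩).trans hy

theorem LiftsModulo.of_retract {r : A} (h : LiftsModulo r M N)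
    {i : M' →ₗ[A] M} {p : M →ₗ[A] M'} (hpi : p ∘ₗ i = .id)
    {j : N' →ₗ[A] N} {q : N →ₗ[A] N'} (hqj : q ∘ₗ j = .id) : LiftsModulo r M' N' := by
  intro φ
  obtain ⟨ψ, hψ⟩ := h (QuotSMulTop.map r j ∘ₗ φ ∘ₗ p)
  refine ⟨q ∘ₗ ψ ∘ₗ i, ?_⟩
  calc (r • ⊤ : Submodule A N').mkQ ∘ₗ q ∘ₗ ψ ∘ₗ i
      = QuotSMulTop.map r q ∘ₗ ((r • ⊤ : Submodule A N).mkQ ∘ₗ ψ) ∘ₗ i := by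
        simp only [← LinearMap.comp_assoc, QuotSMulTop.map_comp_mkQ]
    _ = QuotSMulTop.map r (q ∘ₗ j) ∘ₗ φ ∘ₗ p ∘ₗ i := by
        simp only [hψ, QuotSMulTop.map_comp, LinearMap.comp_assoc]
    _ = φ := by rw [hqj, hpi, QuotSMulTop.map_id, LinearMap.id_comp, LinearMap.comp_id]

theorem MemAdd.exists_retract (h : MemAdd A N M) :
    ∃ (n : ℕ) (i : M →ₗ[A] Fin n → N) (p : (Fin n → N) →ₗ[A] M), p ∘ₗ i = .id := by
  obtain ⟨n, N, N', hc, ⟨e⟩⟩ := h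
  refine ⟨n, N.subtype ∘ₗ e.toLinearMap, e.symm.toLinearMap ∘ₗ N.projectionOnto N' hc, ?_⟩
  ext x
  simp

theorem MemAdd.isSMulRegular {r : A} (h : MemAdd A N M) (hr : IsSMulRegular N r) :
    IsSMulRegular M r := by
  obtain ⟨n, i, p, hpi⟩ := h.exists_retract
  exact .of_injective i (LinearMap.injective_of_comp_eq_id _ _ hpi) (.pi fun _ => hr)

theorem MemAdd.liftsModulo {r : A} (h : LiftsModulo r N N) (hM : MemAdd A N M)
    (hM' : MemAdd A N M') : LiftsModulo r M M' := by
  obtain ⟨m, i, p, hpi⟩ := hM.exists_retract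
  obtain ⟨n, j, q, hqj⟩ := hM'.exists_retract
  exact ((h.pi_left (Fin m)).pi_right (Fin n)).of_retract hpi hqj

end Lifting

theorem MemAdd.isSMulRegular_ext_one {A : Type w} [CommRing A] [Small.{v} A] {S : Type*}
    [AddCommGroup S] [Module A S] {r : A} (hr : IsSMulRegular S r) (hS : LiftsModulo r S S)
    {L₁ L₂ : Type v} [AddCommGroup L₁] [Module A L₁] [AddCommGroup L₂] [Module A L₂]
    (h₁ : MemAdd A S L₁) (h₂ : MemAdd A S L₂) :
    IsSMulRegular (((Ext A (ModuleCat.{v} A) 1).obj (Opposite.op (ModuleCat.of A L₁))).obj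
      (ModuleCat.of A L₂)) r :=
  isSMulRegular_ext_one_moduleCat (h₂.isSMulRegular hr) (MemAdd.liftsModulo hS h₁ h₂)

section RegularSequence

open RingTheory.Sequence

variable {R M : Type*} [CommRing R] [AddCommGroup M] [Module R M] {x y : R}

theorem isSMulRegular_quotSMulTop_iff :
    IsSMulRegular (QuotSMulTop x M) y ↔ ∀ c d : M, y • c = x • d → ∃ e, c = x • e := by
  simp only [isSMulRegular_quotient_iff_mem_of_smul_mem, Submodule.mem_smul_pointwise_iff_exists,
    Submodule.mem_top, true_and, forall_exists_index]
  exact forall₂_congr fun c d => by simp only [eq_comm]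

theorem isWeaklyRegular_pair_iff :
    IsWeaklyRegular M [x, y] ↔
      IsSMulRegular M x ∧ ∀ c d : M, y • c = x • d → ∃ e, c = x • e := by
  rw [isWeaklyRegular_cons_iff, isWeaklyRegular_singleton_iff, isSMulRegular_quotSMulTop_iff]

theorem isWeaklyRegular_pair_pow (h : IsWeaklyRegular M [x, y]) (m n : ℕ) :
    IsWeaklyRegular M [x ^ m, y ^ n] := by
  have hxy : IsWeaklyRegular M [x, y ^ n] := by
    rw [isWeaklyRegular_cons_iff, isWeaklyRegular_singleton_iff] at h ⊢
    exact ⟨h.1, h.2.pow n⟩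
  rw [isWeaklyRegular_pair_iff] at hxy ⊢
  obtain ⟨hx, hdvd⟩ := hxy
  refine ⟨hx.pow m, ?_⟩
  induction m with
  | zero => exact fun c _ _ => ⟨c, by simp⟩
  | succ m ih =>
    intro c d hcd
    obtain ⟨e, rfl⟩ := hdvd c (x ^ m • d) (by rw [hcd, pow_succ', mul_smul])
    obtain ⟨e', rfl⟩ := ih e d (hx (by simpa only [smul_comm x, pow_succ', mul_smul] using hcd))
    exact ⟨e', by rw [pow_succ', mul_smul]⟩

theorem isWeaklyRegular_triple {z : R} (hx : IsSMulRegular M x)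
    (hy : ∀ c d : M, y • c = x • d → ∃ e, c = x • e)
    (hz : ∀ c d e : M, z • c = y • d + x • e → ∃ d' e', c = y • d' + x • e') :
    IsWeaklyRegular M [x, y, z] := by
  rw [isWeaklyRegular_cons_iff, isWeaklyRegular_pair_iff, isSMulRegular_quotSMulTop_iff]
  refine ⟨hx, hy, fun c d hcd => ?_⟩
  obtain ⟨c, rfl⟩ := Submodule.Quotient.mk_surjective _ c
  obtain ⟨d, rfl⟩ := Submodule.Quotient.mk_surjective _ d
  obtain ⟨e, he⟩ := quotSMulTop_mk_eq_mk_iff.1 hcd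
  obtain ⟨d', e', rfl⟩ := hz c d e (by rw [he, add_sub_cancel])
  exact ⟨Submodule.Quotient.mk d', quotSMulTop_mk_eq_mk_iff.2 ⟨e', by rw [add_sub_cancel_left]⟩⟩

end RegularSequence

section Orbit

variable {G S : Type*} [Group G] [CommRing S] [MulSemiringAction G S]

theorem smul_coe_fixedSubring (σ : G) (a : fixedSubring G S) : σ • (a : S) = a := a.2 σ

instance : SMulCommClass G (fixedSubring G S) S where
  smul_comm σ a s := by
    simp only [Subring.smul_def, smul_eq_mul, smul_mul', smul_coe_fixedSubring]

theorem prod_smul_mem_fixedSubring [Fintype G] (s : S) : ∏ τ : G, τ • s ∈ fixedSubring G S :=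
  Finset.smul_prod_perm s

theorem sum_smul_mem_fixedSubring [Fintype G] (s : S) : ∑ τ : G, τ • s ∈ fixedSubring G S := by
  intro σ
  simp only [Finset.smul_sum, smul_smul]
  exact Fintype.sum_equiv (Equiv.mulLeft σ) _ _ fun _ => rfl

variable (G S)

/-- The ring homomorphism sending `b : S` to its orbit map `τ ↦ τ • b`. -/
def orbitMap : S →+* G → S := RingHom.pi fun τ => MulSemiringAction.toRingHom G S τ

/-- The algebra of functions `G → S` generated over `S` by the orbit maps; it is the image of
`S ⊗[S^G] S → (G → S)`, `a ⊗ b ↦ (τ ↦ a * τ • b)`. -/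
def orbitAlgebra : Subalgebra S (G → S) := Algebra.adjoin S (Set.range (orbitMap G S))

variable {G S}

@[simp]
theorem orbitMap_apply (b : S) (τ : G) : orbitMap G S b τ = τ • b := rfl

theorem orbitMap_mem_orbitAlgebra (b : S) : orbitMap G S b ∈ orbitAlgebra G S :=
  Algebra.subset_adjoin ⟨b, rfl⟩

theorem toSubmodule_orbitAlgebra :
    (orbitAlgebra G S).toSubmodule = Submodule.span S (Set.range (orbitMap G S)) := by
  rw [orbitAlgebra, Algebra.adjoin_eq_span]
  exact congrArg _ (Submonoid.closure_eq (MonoidHom.mrange (orbitMap G S)) ▸ rfl)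

theorem orbitAlgebra_induction {p : ∀ h, h ∈ orbitAlgebra G S → Prop}
    (orbit : ∀ b, p (orbitMap G S b) (orbitMap_mem_orbitAlgebra b))
    (add : ∀ h k hh hk, p h hh → p k hk → p (h + k) (add_mem hh hk))
    (smul : ∀ (a : S) h hh, p h hh → p (a • h) (Subalgebra.smul_mem _ hh a))
    {h : G → S} (hh : h ∈ orbitAlgebra G S) : p h hh := by
  suffices ∃ hh, p h hh from this.2
  rw [← Subalgebra.mem_toSubmodule, toSubmodule_orbitAlgebra] at hh
  induction hh using Submodule.span_induction with
  | mem _ hb => obtain ⟨b, rfl⟩ := hb; exact ⟨_, orbit b⟩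
  | zero => exact ⟨zero_mem _, by simpa only [map_zero] using orbit 0⟩
  | add h k _ _ ih ik => exact ⟨_, add h k _ _ ih.2 ik.2⟩
  | smul a h _ ih => exact ⟨_, smul a h _ ih.2⟩

/-- The ideal generated by the displacements `s - σ • s` of `σ`; it cuts out the fixed locus of
`σ` in the spectrum of `S`. -/
def displacementIdeal (S : Type*) [CommRing S] [MulSemiringAction G S] (σ : G) : Ideal S :=
  Ideal.span (Set.range fun s : S => s - σ • s)

theorem exists_mem_orbitAlgebra_of_mem_displacementIdeal {σ : G} {x : S}
    (hx : x ∈ displacementIdeal S σ) : ∃ h ∈ orbitAlgebra G S, h 1 = x ∧ h σ = 0 := by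
  induction hx using Submodule.span_induction with
  | mem _ hs =>
    obtain ⟨s, rfl⟩ := hs
    exact ⟨orbitMap G S s - algebraMap S _ (σ • s),
      sub_mem (orbitMap_mem_orbitAlgebra s) (Subalgebra.algebraMap_mem _ _), by simp, by simp⟩
  | zero => exact ⟨0, zero_mem _, rfl, rfl⟩
  | add x y _ _ hx hy =>
    obtain ⟨h, hh, h1, hσ⟩ := hx
    obtain ⟨k, hk, k1, kσ⟩ := hy
    exact ⟨h + k, add_mem hh hk, by simp [h1, k1], by simp [hσ, kσ]⟩
  | smul a x _ hx =>
    obtain ⟨h, hh, h1, hσ⟩ := hx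
    exact ⟨a • h, Subalgebra.smul_mem _ hh a, by simp [h1], by simp [hσ]⟩

open scoped Classical in
variable (G S) in
/-- The ideal of those `f : S` for which `f` times the indicator function of `1 : G` lies in the
orbit algebra. It plays the role of the Noether different of `S` over `S^G`. -/
noncomputable def orbitDifferent : Ideal S :=
  (orbitAlgebra G S).toSubmodule.comap (LinearMap.single S (fun _ : G => S) 1)

theorem mem_orbitDifferent [DecidableEq G] {f : S} :
    f ∈ orbitDifferent G S ↔ Pi.single (1 : G) f ∈ orbitAlgebra G S := by
  simp only [orbitDifferent, Submodule.mem_comap, LinearMap.coe_single,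
    Subalgebra.mem_toSubmodule]
  congr!

theorem mem_radical_orbitDifferent [Finite G] {x : S}
    (hx : ∀ σ : G, σ ≠ 1 → x ∈ displacementIdeal S σ) : x ∈ (orbitDifferent G S).radical := by
  classical
  have := Fintype.ofFinite G
  choose! h hh h1 hσ using fun σ hσ => exists_mem_orbitAlgebra_of_mem_displacementIdeal (hx σ hσ)
  refine ⟨(Finset.univ.erase (1 : G)).card, mem_orbitDifferent.2 ?_⟩
  have hprod : Pi.single 1 (x ^ (Finset.univ.erase (1 : G)).card) =
      ∏ σ ∈ Finset.univ.erase 1, h σ := by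
    ext τ
    rw [Finset.prod_apply]
    obtain rfl | hτ := eq_or_ne τ 1
    · rw [Pi.single_eq_same, Finset.prod_congr rfl fun σ hσ => h1 σ (Finset.ne_of_mem_erase hσ),
        Finset.prod_const]
    · rw [Pi.single_eq_of_ne hτ, Finset.prod_eq_zero (f := fun σ => h σ τ)
        (Finset.mem_erase.2 ⟨hτ, Finset.mem_univ τ⟩) (hσ τ hτ)]
  rw [hprod]
  exact Subalgebra.prod_mem _ fun σ hσ => hh σ (Finset.ne_of_mem_erase hσ)

theorem single_smul_mem_orbitAlgebra [DecidableEq G] {f : S} (hf : f ∈ orbitDifferent G S)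
    (σ : G) : Pi.single σ (σ • f) ∈ orbitAlgebra G S := by
  have translate {h : G → S} (hh : h ∈ orbitAlgebra G S) :
      (fun τ => σ • h (σ⁻¹ * τ)) ∈ orbitAlgebra G S := by
    induction hh using orbitAlgebra_induction with
    | orbit b => convert orbitMap_mem_orbitAlgebra b; simp [smul_smul]
    | add h k _ _ ih ik => convert add_mem ih ik using 1; ext; simp
    | smul a h _ ih => convert Subalgebra.smul_mem _ ih (σ • a) using 1; ext; simp
  convert translate (mem_orbitDifferent.1 hf) using 1
  ext τ
  obtain rfl | hτ := eq_or_ne τ σ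
  · simp
  · rw [Pi.single_eq_of_ne hτ, Pi.single_eq_of_ne (by simpa [inv_mul_eq_one, eq_comm] using hτ),
      smul_zero]

section OrbitSum

variable [Fintype G] {T : Type*} [AddCommGroup T] [Module S T]

theorem sum_smul_eq_zero_of_mem_orbitAlgebra {c : G → T} (hc : ∀ s : S, ∑ τ, (τ • s) • c τ = 0)
    {h : G → S} (hh : h ∈ orbitAlgebra G S) : ∑ τ, h τ • c τ = 0 := by
  induction hh using orbitAlgebra_induction with
  | orbit b => exact hc b
  | add h k _ _ ih ik =>
    simp only [Pi.add_apply, add_smul, Finset.sum_add_distrib, ih, ik, add_zero]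
  | smul a h _ ih => simp only [Pi.smul_apply, smul_assoc, ← Finset.smul_sum, ih, smul_zero]

theorem smul_smul_eq_zero_of_mem_orbitDifferent {c : G → T}
    (hc : ∀ s : S, ∑ τ, (τ • s) • c τ = 0) {f : S} (hf : f ∈ orbitDifferent G S) (σ : G) :
    (σ • f) • c σ = 0 := by
  classical
  simpa [Pi.single_apply, ite_smul] using
    sum_smul_eq_zero_of_mem_orbitAlgebra hc (single_smul_mem_orbitAlgebra hf σ)

variable [Module (fixedSubring G S) T] [IsScalarTower (fixedSubring G S) S T]

theorem exists_map_sum_mul_eq_sum_smul {h : G → S} (hh : h ∈ orbitAlgebra G S)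
    (φ : S →ₗ[fixedSubring G S] T) :
    ∃ t : G → T, ∀ s : S, φ (∑ τ, h τ * τ • s) = ∑ τ, (τ • s) • t τ := by
  induction hh using orbitAlgebra_induction generalizing φ with
  | orbit b =>
    refine ⟨fun τ => (τ • b) • φ 1, fun s => ?_⟩
    let a : fixedSubring G S := ⟨∑ τ : G, τ • (s * b), sum_smul_mem_fixedSubring _⟩
    calc φ (∑ τ, (τ • b) * τ • s) = φ (a • 1) := by
          simp [a, Subring.smul_def, mul_comm]
      _ = (a : S) • φ 1 := by rw [map_smul]; exact (algebraMap_smul S a _).symm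
      _ = _ := by simp only [a, smul_mul', Finset.sum_smul, mul_smul]
  | add h k _ _ ih ik =>
    obtain ⟨t, ht⟩ := ih φ
    obtain ⟨u, hu⟩ := ik φ
    refine ⟨t + u, fun s => ?_⟩
    simp only [Pi.add_apply, add_mul, smul_add, Finset.sum_add_distrib, map_add, ht, hu]
  | smul a h _ ih =>
    obtain ⟨t, ht⟩ := ih (φ ∘ₗ LinearMap.mulLeft _ a)
    refine ⟨t, fun s => ?_⟩
    rw [← ht]
    simp only [Pi.smul_apply, smul_eq_mul, mul_assoc, ← Finset.mul_sum, LinearMap.comp_apply,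
      LinearMap.mulLeft_apply]

theorem exists_map_mul_eq_sum_smul {f : S} (hf : f ∈ orbitDifferent G S)
    (φ : S →ₗ[fixedSubring G S] T) :
    ∃ t : G → T, ∀ s : S, φ (f * s) = ∑ τ, (τ • s) • t τ := by
  classical
  obtain ⟨t, ht⟩ := exists_map_sum_mul_eq_sum_smul (mem_orbitDifferent.1 hf) φ
  exact ⟨t, fun s => by simpa [Pi.single_apply, ite_mul] using ht s⟩

end OrbitSum

end Orbit

section OrbitLift

open RingTheory.Sequence
open scoped Pointwise

variable {G S : Type*} [Group G] [CommRing S] [MulSemiringAction G S]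

theorem isWeaklyRegular_smul_smul {θ : fixedSubring G S} {x y : S}
    (h : IsWeaklyRegular S [(θ : S), x, y]) (σ : G) :
    IsWeaklyRegular S [(θ : S), σ • x, σ • y] := by
  refine (AddEquiv.isWeaklyRegular_congr (e := DistribMulAction.toAddEquiv S σ) ?_).1 h
  simp [smul_mul', smul_coe_fixedSubring]

variable {T : Type*} [AddCommGroup T] [Module S T]
  [Module (fixedSubring G S) T] [IsScalarTower (fixedSubring G S) S T]

theorem eq_zero_of_map_mul_eq_zero [Finite G] {f : S} (hf : ∀ τ : G, IsSMulRegular T (τ • f))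
    {φ : S →ₗ[fixedSubring G S] T} (hφ : ∀ s, φ (f * s) = 0) : φ = 0 := by
  classical
  have := Fintype.ofFinite G
  let norm : fixedSubring G S := ⟨∏ τ : G, τ • f, prod_smul_mem_fixedSubring f⟩
  obtain ⟨e, he⟩ : f ∣ norm :=
    (dvd_of_eq (one_smul G f).symm).trans (Finset.dvd_prod_of_mem _ (Finset.mem_univ 1))
  have hnorm : IsSMulRegular T (norm : S) :=
    Finset.prod_induction _ (IsSMulRegular T) (fun _ _ => .mul) (.one T) fun τ _ => hf τ
  ext s
  refine isSMulRegular_iff_right_eq_zero_of_smul.1 hnorm _ ?_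
  calc (norm : S) • φ s = φ (norm • s) := by rw [map_smul]; exact algebraMap_smul S norm _
    _ = φ (f * (e * s)) := by rw [Subring.smul_def, smul_eq_mul, he, mul_assoc]
    _ = 0 := hφ _

/- Expanding `φ (f * f' * s)` through `f` and through `f'` gives `τ • f' • t τ = τ • f • t' τ`;
regularity then makes `t τ` divisible by `τ • f`. -/
theorem exists_map_mul_eq_sum_smul_mul [Fintype G] {f f' : S} (hf : f ∈ orbitDifferent G S)
    (hf' : f' ∈ orbitDifferent G S) (hreg : ∀ τ : G, IsWeaklyRegular T [τ • f, τ • f'])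
    (φ : S →ₗ[fixedSubring G S] T) :
    ∃ u : G → T, ∀ s : S, φ (f * s) = ∑ τ, (τ • (f * s)) • u τ := by
  simp only [isWeaklyRegular_pair_iff] at hreg
  obtain ⟨t, ht⟩ := exists_map_mul_eq_sum_smul hf φ
  obtain ⟨t', ht'⟩ := exists_map_mul_eq_sum_smul hf' φ
  have hcompare (τ : G) : (τ • f') • t τ = (τ • f) • t' τ := by
    rw [← sub_eq_zero]
    refine (isSMulRegular_iff_right_eq_zero_of_smul.1 (hreg τ).1) _
      (smul_smul_eq_zero_of_mem_orbitDifferent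
        (c := fun τ => (τ • f') • t τ - (τ • f) • t' τ) (fun s => ?_) hf τ)
    calc ∑ τ, (τ • s) • ((τ • f') • t τ - (τ • f) • t' τ)
        = ∑ τ, (τ • (f' * s)) • t τ - ∑ τ, (τ • (f * s)) • t' τ := by
          simp only [smul_sub, Finset.sum_sub_distrib, smul_mul', mul_smul, smul_comm (_ • s)]
      _ = φ (f * (f' * s)) - φ (f' * (f * s)) := by rw [ht, ht']
      _ = 0 := by rw [mul_left_comm, sub_self]
  choose u hu using fun τ => (hreg τ).2 _ _ (hcompare τ)
  refine ⟨u, fun s => (ht s).trans (Finset.sum_congr rfl fun τ _ => ?_)⟩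
  rw [hu τ, smul_mul', mul_comm, mul_smul]

theorem exists_map_eq_sum_smul [Fintype G] {f f' : S} (hf : f ∈ orbitDifferent G S)
    (hf' : f' ∈ orbitDifferent G S) (hreg : ∀ τ : G, IsWeaklyRegular T [τ • f, τ • f'])
    (φ : S →ₗ[fixedSubring G S] T) : ∃ u : G → T, ∀ s : S, φ s = ∑ τ, (τ • s) • u τ := by
  obtain ⟨u, hu⟩ := exists_map_mul_eq_sum_smul_mul hf hf' hreg φ
  let ψ : S →ₗ[fixedSubring G S] T :=
    ∑ τ, (LinearMap.toSpanSingleton S T (u τ)).restrictScalars _ ∘ₗ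
      DistribSMul.toLinearMap (fixedSubring G S) S τ
  have hψ (s : S) : ψ s = ∑ τ, (τ • s) • u τ := by simp [ψ]
  have hsub : φ - ψ = 0 :=
    eq_zero_of_map_mul_eq_zero (fun τ => (isWeaklyRegular_pair_iff.1 (hreg τ)).1) fun s => by
      rw [LinearMap.sub_apply, hψ, hu, sub_self]
  exact ⟨u, fun s => by rw [sub_eq_zero.1 hsub, hψ]⟩

theorem liftsModulo_of_isWeaklyRegular [Finite G] {θ : fixedSubring G S} {x y : S}
    (hreg : IsWeaklyRegular S [(θ : S), x, y])
    (hx : ∀ σ : G, σ ≠ 1 → x ∈ displacementIdeal S σ)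
    (hy : ∀ σ : G, σ ≠ 1 → y ∈ displacementIdeal S σ) : LiftsModulo θ S S := by
  have := Fintype.ofFinite G
  intro φ
  obtain ⟨m, hm⟩ := mem_radical_orbitDifferent hx
  obtain ⟨n, hn⟩ := mem_radical_orbitDifferent hy
  have hregQuot (τ : G) :
      IsWeaklyRegular (QuotSMulTop (θ : S) S) [τ • x ^ m, τ • y ^ n] := by
    simp only [smul_pow']
    exact isWeaklyRegular_pair_pow
      ((isWeaklyRegular_cons_iff _ _ _).1 (isWeaklyRegular_smul_smul hreg τ)).2 m n
  let e : QuotSMulTop θ S ≃ₗ[fixedSubring G S] QuotSMulTop (θ : S) S :=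
    Submodule.Quotient.restrictScalarsEquiv (fixedSubring G S) ((θ : S) • (⊤ : Ideal S))
  obtain ⟨u, hu⟩ := exists_map_eq_sum_smul hm hn hregQuot (e.toLinearMap ∘ₗ φ)
  choose t ht using fun τ => Submodule.Quotient.mk_surjective _ (u τ)
  refine ⟨∑ τ, LinearMap.mulRight _ (t τ) ∘ₗ DistribSMul.toLinearMap _ S τ, ?_⟩
  ext s
  apply e.injective
  calc e (Submodule.Quotient.mk ((∑ τ, LinearMap.mulRight _ (t τ) ∘ₗ
        DistribSMul.toLinearMap (fixedSubring G S) S τ) s))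
      = Submodule.Quotient.mk (∑ τ, (τ • s) • t τ) := by
        simp only [LinearMap.sum_apply, LinearMap.comp_apply, LinearMap.mulRight_apply,
          DistribSMul.toLinearMap_apply]
        rfl
    _ = ∑ τ, (τ • s) • u τ := by
        rw [← Submodule.mkQ_apply, map_sum]
        simp only [map_smul, Submodule.mkQ_apply, ht]
    _ = e (φ s) := (hu s).symm

end OrbitLift

section PowerSeries

open RingTheory.Sequence
open scoped nonZeroDivisors

variable {V ι : Type*} [CommRing V]

section KillVar

variable [DecidableEq ι]

/-- The endomorphism of the power series ring that substitutes `0` for the variable `X i`. -/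
noncomputable def killVar (V : Type*) [CommRing V] (i : ι) :
    MvPowerSeries ι V →+* MvPowerSeries ι V :=
  rescale (Function.update 1 i 0)

theorem coeff_killVar_of_eq_zero {i : ι} {n : ι →₀ ℕ} (hn : n i = 0) (f : MvPowerSeries ι V) :
    coeff n (killVar V i f) = coeff n f := by
  rw [killVar, coeff_rescale, Finsupp.prod, Finset.prod_eq_one, one_mul]
  intro j hj
  have hji : j ≠ i := fun h => Finsupp.mem_support_iff.1 hj (h ▸ hn)
  simp [hji]

theorem coeff_killVar_of_ne_zero {i : ι} {n : ι →₀ ℕ} (hn : n i ≠ 0) (f : MvPowerSeries ι V) :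
    coeff n (killVar V i f) = 0 := by
  rw [killVar, coeff_rescale, Finsupp.prod,
    Finset.prod_eq_zero (Finsupp.mem_support_iff.2 hn) (by simp [hn]), zero_mul]

theorem constantCoeff_killVar (i : ι) (f : MvPowerSeries ι V) :
    constantCoeff (killVar V i f) = constantCoeff f :=
  coeff_killVar_of_eq_zero rfl f

theorem X_dvd_sub_killVar (i : ι) (f : MvPowerSeries ι V) : X i ∣ f - killVar V i f :=
  X_dvd_iff.2 fun n hn => by rw [map_sub, coeff_killVar_of_eq_zero hn, sub_self]

theorem X_dvd_iff_killVar_eq_zero {i : ι} {f : MvPowerSeries ι V} :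
    X i ∣ f ↔ killVar V i f = 0 := by
  refine ⟨fun h => ext fun n => ?_, fun h => by simpa [h] using X_dvd_sub_killVar i f⟩
  by_cases hn : n i = 0
  · rw [coeff_killVar_of_eq_zero hn, X_dvd_iff.1 h n hn, coeff_zero]
  · rw [coeff_killVar_of_ne_zero hn, coeff_zero]

theorem killVar_X_self (i : ι) : killVar V i (X i) = 0 :=
  X_dvd_iff_killVar_eq_zero.1 dvd_rfl

theorem killVar_X_of_ne {i j : ι} (hij : i ≠ j) : killVar V i (X j) = X j := by
  ext n
  by_cases hn : n i = 0
  · exact coeff_killVar_of_eq_zero hn _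
  · rw [coeff_killVar_of_ne_zero hn, coeff_X, if_neg]
    rintro rfl
    exact hn (Finsupp.single_eq_of_ne hij)

end KillVar

theorem X_dvd_of_X_dvd_mul {θ f : MvPowerSeries ι V} (hθ : constantCoeff θ ∈ V⁰) {i : ι}
    (h : X i ∣ θ * f) : X i ∣ f := by
  classical
  rw [X_dvd_iff_killVar_eq_zero, map_mul] at h
  rw [X_dvd_iff_killVar_eq_zero]
  refine (mul_left_mem_nonZeroDivisors_eq_zero_iff ?_).1 h
  exact mem_nonZeroDivisors_of_constantCoeff (by rwa [constantCoeff_killVar])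

theorem exists_eq_mul_of_X_mul_eq_mul {θ c d : MvPowerSeries ι V} (hθ : constantCoeff θ ∈ V⁰)
    {i : ι} (h : X i * c = θ * d) : ∃ e, c = θ * e := by
  have hX : (X i : MvPowerSeries ι V) ∈ (MvPowerSeries ι V)⁰ := X_mem_nonzeroDivisors
  obtain ⟨e, rfl⟩ := X_dvd_of_X_dvd_mul hθ ⟨c, h.symm⟩
  rw [mul_left_comm, mul_cancel_left_mem_nonZeroDivisors hX] at h
  exact ⟨e, h⟩

theorem isWeaklyRegular_X_X {θ : MvPowerSeries ι V} (hθ : constantCoeff θ ∈ V⁰) {i j : ι}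
    (hij : i ≠ j) : IsWeaklyRegular (MvPowerSeries ι V) [θ, X i, X j] := by
  classical
  have hθ' : θ ∈ (MvPowerSeries ι V)⁰ := mem_nonZeroDivisors_of_constantCoeff hθ
  refine isWeaklyRegular_triple (isRegular_iff_mem_nonZeroDivisors.2 hθ').left.isSMulRegular
    (fun c d => exists_eq_mul_of_X_mul_eq_mul hθ) fun c d e hcde => ?_
  have hkill : X j * killVar V i c = killVar V i θ * killVar V i e := by
    simpa [killVar_X_self, killVar_X_of_ne hij] using congrArg (killVar V i) hcde
  obtain ⟨e', he'⟩ := exists_eq_mul_of_X_mul_eq_mul (by rwa [constantCoeff_killVar]) hkill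
  obtain ⟨a, ha⟩ := X_dvd_sub_killVar i c
  obtain ⟨b, hb⟩ := X_dvd_sub_killVar i θ
  refine ⟨a - b * e', e', ?_⟩
  simp only [smul_eq_mul]
  linear_combination ha + he' - e' * hb

theorem X_mem_displacementIdeal {G : Type*} [Group G] [MulSemiringAction G (MvPowerSeries ι V)]
    [Fintype ι] [DecidableEq ι] {σ : G} {M : Matrix ι ι V} (hM : IsUnit (M - 1).det)
    (hσ : ∀ i, σ • (X i : MvPowerSeries ι V) = ∑ j, C (M j i) * X j) (i : ι) :
    X i ∈ displacementIdeal (MvPowerSeries ι V) σ := by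
  let N : Matrix ι ι V := (1 - M)⁻¹
  have hN : (1 - M) * N = 1 := Matrix.mul_nonsing_inv _ (by
    rwa [← neg_sub, Matrix.det_neg, IsUnit.mul_iff, and_iff_right (isUnit_one.neg.pow _)])
  have hX (k : ι) : X k - σ • X k = ∑ j, C ((1 - M) j k) * (X j : MvPowerSeries ι V) := by
    simp [hσ, sub_mul, Matrix.one_apply, apply_ite C]
  have hsum : X i = ∑ k, C (N k i) * (X k - σ • X k : MvPowerSeries ι V) := by
    simp only [hX, Finset.mul_sum]
    rw [Finset.sum_comm]
    simp only [← mul_assoc, ← map_mul, ← Finset.sum_mul, ← map_sum, mul_comm (N _ i),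
      ← Matrix.mul_apply, hN, Matrix.one_apply]
    simp
  rw [hsum]
  exact sum_mem fun k _ => Ideal.mul_mem_left _ _ (Ideal.subset_span ⟨X k, rfl⟩)

end PowerSeries

section Residue

theorem isUnit_of_card_le_rank {K n : Type*} [Field K] [Fintype n] [DecidableEq n]
    {M : Matrix n n K} (h : Fintype.card n ≤ M.rank) : IsUnit M := by
  rw [← Matrix.linearIndependent_cols_iff_isUnit, linearIndependent_iff_card_le_finrank_span]
  rwa [Matrix.rank_eq_finrank_span_cols] at h

theorem isUnit_det_sub_one_of_card_le_rank {R n : Type*} [CommRing R] [IsLocalRing R] [Fintype n]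
    [DecidableEq n] {M : Matrix n n R} (h : Fintype.card n ≤ (M.map (residue R) - 1).rank) :
    IsUnit (M - 1).det := by
  have hdet : residue R (M - 1).det = (M.map (residue R) - 1).det := by
    rw [RingHom.map_det, map_sub, map_one, RingHom.mapMatrix_apply]
  rw [← isUnit_map_iff (residue R), hdet, ← Matrix.isUnit_iff_isUnit_det]
  exact isUnit_of_card_le_rank h

theorem constantCoeff_eq_zero_of_mem_span_X_pow {R ι : Type*} [CommSemiring R] {s : Set ι} {n : ℕ}
    (hn : n ≠ 0) {f : MvPowerSeries ι R} (hf : f ∈ Ideal.span (X '' s) ^ n) :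
    constantCoeff f = 0 := by
  have hle : Ideal.span (X '' s) ≤ RingHom.ker (constantCoeff (σ := ι) (R := R)) := by
    rw [Ideal.span_le]
    rintro _ ⟨i, -, rfl⟩
    exact constantCoeff_X i
  exact hle (Ideal.pow_le_self hn hf)

end Residue

theorem theta_regular_on_ext_one_general {V : Type u} [CommRing V] {ι : Type w} [Fintype ι]
    [DecidableEq ι] [Nontrivial ι] {G : Type*} [Group G] [Finite G]
    [MulSemiringAction G (MvPowerSeries ι V)] {M : G → Matrix ι ι V}
    (hlin : ∀ σ i, σ • (X i : MvPowerSeries ι V) = ∑ j, C (M σ j i) * X j)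
    (hM : ∀ σ, σ ≠ 1 → IsUnit (M σ - 1).det)
    {θ : fixedSubring G (MvPowerSeries ι V)}
    (hθ : constantCoeff (θ : MvPowerSeries ι V) ∈ nonZeroDivisors V)
    [Small.{v} (fixedSubring G (MvPowerSeries ι V))] {L₁ L₂ : Type v} [AddCommGroup L₁]
    [AddCommGroup L₂] [Module (fixedSubring G (MvPowerSeries ι V)) L₁]
    [Module (fixedSubring G (MvPowerSeries ι V)) L₂]
    (h₁ : MemAdd (fixedSubring G (MvPowerSeries ι V)) (MvPowerSeries ι V) L₁)
    (h₂ : MemAdd (fixedSubring G (MvPowerSeries ι V)) (MvPowerSeries ι V) L₂) :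
    IsSMulRegular (((Ext (fixedSubring G (MvPowerSeries ι V))
      (ModuleCat.{v} (fixedSubring G (MvPowerSeries ι V))) 1).obj
        (Opposite.op (ModuleCat.of _ L₁))).obj (ModuleCat.of _ L₂)) θ := by
  obtain ⟨i, j, hij⟩ := exists_pair_ne ι
  have hreg := isWeaklyRegular_X_X hθ hij
  have hX (k : ι) (σ : G) (hσ : σ ≠ 1) : X k ∈ displacementIdeal (MvPowerSeries ι V) σ :=
    X_mem_displacementIdeal (hM σ hσ) (hlin σ) k
  have hθS : IsSMulRegular (MvPowerSeries ι V) θ :=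
    ((RingTheory.Sequence.isWeaklyRegular_cons_iff _ _ _).1 hreg).1
  exact MemAdd.isSMulRegular_ext_one hθS (liftsModulo_of_isWeaklyRegular hreg (hX i) (hX j)) h₁ h₂

/-- With `S = V[[x₁,x₂]]`, `G ⊆ GL₂(V)` finite without pseudo-reflections, `p ∤ |G|`,
and `θ = π − g ∈ S^G` where `g ∈ (x₁,x₂)² ∩ S^G` (`g = 0` allowed): for all
`L₁, L₂ ∈ add_{S^G}(S)`, the element `θ` is a non-zerodivisor on
`Ext¹_{S^G}(L₁, L₂)`. -/
theorem theta_regular_on_ext_one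
    (V : Type) [CommRing V] [IsDomain V] [IsDiscreteValuationRing V] [CharZero V]
    [IsAdicComplete (maximalIdeal V) V]
    (p : ℕ) (hp : p.Prime)
    [CharP (ResidueField V) p] [IsAlgClosed (ResidueField V)]
    (G : Subgroup (GL (Fin 2) V)) [Finite G] (hG : ¬ (p ∣ Nat.card G))
    [MulSemiringAction G (MvPowerSeries (Fin 2) V)]
    (hlin : ∀ (σ : G) (i : Fin 2),
      σ • (X i : MvPowerSeries (Fin 2) V) =
        ∑ j : Fin 2, C (σ := Fin 2) (R := V) (((σ : GL (Fin 2) V) : Matrix (Fin 2) (Fin 2) V) j i) * X j)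
    (hconst : ∀ (σ : G) (v : V),
      σ • (C (σ := Fin 2) (R := V) v) = C (σ := Fin 2) (R := V) v)
    (hpr : ∀ σ : G, σ ≠ 1 →
      ¬ Matrix.rank
          ((((σ : GL (Fin 2) V) : Matrix (Fin 2) (Fin 2) V)).map (residue V) - 1) ≤ 1)
    (π : V) (hπ : maximalIdeal V = Ideal.span {π})
    (g : MvPowerSeries (Fin 2) V)
    (hg : g ∈ (Ideal.span {(X 0 : MvPowerSeries (Fin 2) V), X 1}) ^ 2)
    (θ : fixedSubring G (MvPowerSeries (Fin 2) V))
    (hθ : (θ : MvPowerSeries (Fin 2) V) = C (σ := Fin 2) (R := V) π - g)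
    (L₁ L₂ : Type) [AddCommGroup L₁] [AddCommGroup L₂]
    [Module (fixedSubring G (MvPowerSeries (Fin 2) V)) L₁]
    [Module (fixedSubring G (MvPowerSeries (Fin 2) V)) L₂]
    [Module.Finite (fixedSubring G (MvPowerSeries (Fin 2) V)) L₁]
    [Module.Finite (fixedSubring G (MvPowerSeries (Fin 2) V)) L₂]
    (h₁ : MemAdd (fixedSubring G (MvPowerSeries (Fin 2) V)) (MvPowerSeries (Fin 2) V) L₁)
    (h₂ : MemAdd (fixedSubring G (MvPowerSeries (Fin 2) V)) (MvPowerSeries (Fin 2) V) L₂) :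
    ∀ x : ((Ext (fixedSubring G (MvPowerSeries (Fin 2) V))
        (ModuleCat (fixedSubring G (MvPowerSeries (Fin 2) V))) 1).obj
          (Opposite.op (ModuleCat.of (fixedSubring G (MvPowerSeries (Fin 2) V)) L₁))).obj
        (ModuleCat.of (fixedSubring G (MvPowerSeries (Fin 2) V)) L₂),
      θ • x = 0 → x = 0 := by
  have hM (σ : G) (hσ : σ ≠ 1) : IsUnit (((σ : GL (Fin 2) V) : Matrix (Fin 2) (Fin 2) V) - 1).det :=
    isUnit_det_sub_one_of_card_le_rank (not_le.1 (hpr σ hσ))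
  have hg₀ : constantCoeff g = 0 :=
    constantCoeff_eq_zero_of_mem_span_X_pow (s := {0, 1}) two_ne_zero (by rwa [Set.image_pair])
  have hπ₀ : π ≠ 0 := by
    rintro rfl
    exact IsDiscreteValuationRing.not_a_field V (by simp [hπ])
  have hθ₀ : constantCoeff (θ : MvPowerSeries (Fin 2) V) ∈ nonZeroDivisors V := by
    simpa [hθ, hg₀] using hπ₀
  exact isSMulRegular_iff_right_eq_zero_of_smul.1
    (theta_regular_on_ext_one_general hlin hM hθ₀ h₁ h₂)
end

section
/- Let B be a Noetherian local ring and let π ∈ B be an element such that πB is a prime ideal of B and π does not belong to any minimal prime of B. Then B is an integral domain. -/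
section CommSemiring

variable {R : Type*} [CommSemiring R]

theorem span_singleton_mul_eq_of_isPrime_of_le {π : R} {Q : Ideal R} (hQ : Q.IsPrime)
    (hle : Q ≤ Ideal.span {π}) (hπ : π ∉ Q) : Ideal.span {π} * Q = Q := by
  refine le_antisymm Ideal.mul_le_right fun x hx ↦ ?_
  obtain ⟨y, rfl⟩ := Ideal.mem_span_singleton.mp (hle hx)
  have hy : y ∈ Q := (hQ.mem_or_mem hx).resolve_left hπ
  exact Ideal.mul_mem_mul (Ideal.mem_span_singleton_self π) hy

theorem le_iInf_pow_of_mul_eq {I J : Ideal R} (h : I * J = J) : J ≤ ⨅ n : ℕ, I ^ n := by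
  have hpow (n : ℕ) : I ^ n * J = J := by
    induction n with
    | zero => rw [pow_zero, one_mul]
    | succ n ih => rw [pow_succ, mul_assoc, h, ih]
  exact le_iInf fun n ↦ (hpow n).ge.trans Ideal.mul_le_left

end CommSemiring

theorem isDomain_of_principal_prime_not_in_minimal_general {B : Type*} [CommRing B]
    {π : B} (hsep : ⨅ n : ℕ, Ideal.span {π} ^ n = ⊥) {Q : Ideal B} (hQ : Q.IsPrime)
    (hle : Q ≤ Ideal.span {π}) (hπ : π ∉ Q) : IsDomain B := by
  have hmul : Ideal.span {π} * Q = Q := span_singleton_mul_eq_of_isPrime_of_le hQ hle hπ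
  have hbot : Q = ⊥ := le_bot_iff.mp ((le_iInf_pow_of_mul_eq hmul).trans_eq hsep)
  subst hbot
  exact IsDomain.of_bot_isPrime B

/-- Let `B` be a Noetherian local ring and `π ∈ B` an element such that `πB` is a
prime ideal and `π` lies in no minimal prime of `B`.  Then `B` is an integral
domain. -/
theorem isDomain_of_principal_prime_not_in_minimal
    (B : Type) [CommRing B] [IsNoetherianRing B] [IsLocalRing B]
    (π : B) (hprime : (Ideal.span {π}).IsPrime)
    (hmin : ∀ Q ∈ minimalPrimes B, π ∉ Q) :
    IsDomain B := by
  obtain ⟨Q, hQ, hle⟩ := Ideal.exists_minimalPrimes_le (bot_le : ⊥ ≤ Ideal.span {π})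
  exact isDomain_of_principal_prime_not_in_minimal_general
    (Ideal.iInf_pow_eq_bot_of_isLocalRing _ hprime.ne_top) hQ.isPrime hle (hmin Q hQ)
end
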